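/- Let u ∈ H¹_loc be harmonic on Ω ∩ B_1 with u = 0 on B_1 \ Ω (zero extension), and suppose the spherical doubling index satisfies N_u(2^{-k}) ≤ M for all k (with N_u(r) = ⨍_{∂B_r}u² / ⨍_{∂B_{r/4}}u²). Then there exist c > 0 and β > 0 (depending on M, d, and u on B_1) such that ⨍_{B_r} u² ≥ c r^β for all small r > 0; in particular u does not vanish to infinite order at 0. -/

import Mathlib

/-!
The doubling bound, iterated along the scales `r₀ / 4 ^ j`, bounds the spherical averages of `u²`
from below by a power of the scale, provided that the average at the first scale is positive. Both
this positivity and the passage from spheres to balls come from a sub-mean value inequality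
`u(y)² ≤ C ⨍_{B_ρ(y)} u²`. The zero extension `u` need not be differentiable on its zero set, so the
inequality is proved for `F ∘ u`, where `F` is a convex function that vanishes near `0` and is at
most `t²`; it passes to `u` by scaling. If `u` vanished on a sphere, then cutting it off outside
would give a square-integrable function on the whole space with the same sub-mean value property,
hence `0`.
-/

open MeasureTheory Metric Real
open scoped ENNReal NNReal

noncomputable section

/-- The Euclidean Laplacian of `f : ℝ^d → ℝ` at a point. -/
def lap (d : ℕ) (f : EuclideanSpace ℝ (Fin d) → ℝ) (x : EuclideanSpace ℝ (Fin d)) : ℝ :=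
  ∑ i : Fin d,
    fderiv ℝ (fun y => fderiv ℝ f y (EuclideanSpace.single i 1)) x
      (EuclideanSpace.single i 1)

/-- Average of `f` over the sphere of radius `r` centered at `0`. -/
def sphAvg (d : ℕ) (f : EuclideanSpace ℝ (Fin d) → ℝ) (r : ℝ) : ℝ :=
  ⨍ y in sphere (0 : EuclideanSpace ℝ (Fin d)) r, f y ∂(μH[(d : ℝ) - 1])

/-- Average of `f` over the ball of radius `r` centered at `0`. -/
def ballAvg (d : ℕ) (f : EuclideanSpace ℝ (Fin d) → ℝ) (r : ℝ) : ℝ :=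
  ⨍ y in ball (0 : EuclideanSpace ℝ (Fin d)) r, f y ∂volume

section Average

lemma setAverage_nonneg {α : Type*} [MeasurableSpace α] {μ : Measure α} (s : Set α) {f : α → ℝ}
    (hf : 0 ≤ f) : 0 ≤ ⨍ x in s, f x ∂μ := by
  rw [setAverage_eq]
  exact smul_nonneg (by positivity) (integral_nonneg hf)

lemma setAverage_mono_on {α : Type*} [MeasurableSpace α] {μ : Measure α} {s : Set α}
    {f g : α → ℝ} (hs : MeasurableSet s) (hf : IntegrableOn f s μ) (hg : IntegrableOn g s μ)
    (hfg : ∀ x ∈ s, f x ≤ g x) : ⨍ x in s, f x ∂μ ≤ ⨍ x in s, g x ∂μ := by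
  rw [setAverage_eq, setAverage_eq]
  exact smul_le_smul_of_nonneg_left (setIntegral_mono_on hf hg hs hfg) (by positivity)

lemma integrableOn_ball_of_continuousOn_closedBall {X : Type*} [MetricSpace X]
    [ProperSpace X] [MeasurableSpace X] [OpensMeasurableSpace X] {μ : Measure X}
    [IsFiniteMeasureOnCompacts μ] {f : X → ℝ} {x : X} {r : ℝ}
    (hf : ContinuousOn f (closedBall x r)) : IntegrableOn f (ball x r) μ :=
  (hf.integrableOn_compact (isCompact_closedBall x r)).mono_set ball_subset_closedBall

variable {E : Type*} [NormedAddCommGroup E] [NormedSpace ℝ E] [FiniteDimensional ℝ E]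
  [MeasurableSpace E] (μ : Measure E) [μ.IsAddHaarMeasure]

lemma addHaar_real_unitBall_pos : 0 < μ.real (ball (0 : E) 1) :=
  ENNReal.toReal_pos (measure_ball_pos μ 0 one_pos).ne' measure_ball_lt_top.ne

variable [BorelSpace E]

lemma addHaar_real_ball_of_pos (y : E) {r : ℝ} (hr : 0 < r) :
    μ.real (ball y r) = r ^ Module.finrank ℝ E * μ.real (ball 0 1) := by
  simp [Measure.real, Measure.addHaar_ball_of_pos μ y hr, hr.le]

variable {μ}

lemma setAverage_ball_eq_setAverage_unitBall (f : E → ℝ) (y : E) {ρ : ℝ} (hρ : 0 < ρ) :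
    ⨍ x in ball y ρ, f x ∂μ = ⨍ x in ball 0 1, f (y + ρ • x) ∂μ := by
  have htrans : ∫ x in ball y ρ, f x ∂μ = ∫ x in ball 0 ρ, f (y + x) ∂μ := by
    rw [← (measurePreserving_add_left μ y).setIntegral_preimage_emb
      (measurableEmbedding_addLeft y), preimage_add_ball, sub_self]
  have hscale := Measure.setIntegral_comp_smul_of_pos μ (fun x => f (y + x)) (ball 0 1) hρ
  rw [smul_unitBall_of_pos hρ] at hscale
  rw [setAverage_eq, setAverage_eq, hscale, addHaar_real_ball_of_pos μ y hρ, htrans, mul_inv,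
    mul_comm (ρ ^ _)⁻¹, mul_smul]

lemma setAverage_ball_le_of_subset {f : E → ℝ} (hf : 0 ≤ f) {x y : E} {r s : ℝ} (hr : 0 < r)
    (hs : 0 < s) (hsub : ball y s ⊆ ball x r) (hint : IntegrableOn f (ball x r) μ) :
    ⨍ z in ball y s, f z ∂μ ≤ (r / s) ^ Module.finrank ℝ E * ⨍ z in ball x r, f z ∂μ := by
  have hunit := addHaar_real_unitBall_pos μ
  have hmono : ∫ z in ball y s, f z ∂μ ≤ ∫ z in ball x r, f z ∂μ :=
    setIntegral_mono_set hint (ae_of_all _ hf) hsub.eventuallyLE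
  simp only [setAverage_eq, addHaar_real_ball_of_pos μ _ hr, addHaar_real_ball_of_pos μ _ hs,
    smul_eq_mul]
  calc _ ≤ (s ^ Module.finrank ℝ E * μ.real (ball 0 1))⁻¹ * ∫ z in ball x r, f z ∂μ := by gcongr
    _ = _ := by rw [div_pow]; field_simp

end Average

section SmoothPosPart

/-- A smooth convex substitute for the positive part `max t 0`, obtained by integrating
`Real.smoothTransition`. -/
def smoothPosPart (t : ℝ) : ℝ := ∫ s in 0..t, smoothTransition s

lemma hasDerivAt_smoothPosPart (t : ℝ) : HasDerivAt smoothPosPart (smoothTransition t) t :=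
  (smoothTransition.continuous.integral_hasStrictDerivAt 0 t).hasDerivAt

lemma deriv_smoothPosPart : deriv smoothPosPart = smoothTransition :=
  funext fun t => (hasDerivAt_smoothPosPart t).deriv

lemma differentiable_smoothPosPart : Differentiable ℝ smoothPosPart :=
  fun t => (hasDerivAt_smoothPosPart t).differentiableAt

lemma contDiff_smoothPosPart : ContDiff ℝ 2 smoothPosPart := by
  rw [← one_add_one_eq_two, contDiff_succ_iff_deriv, deriv_smoothPosPart]
  exact ⟨differentiable_smoothPosPart, by simp, smoothTransition.contDiff⟩

lemma monotone_smoothPosPart : Monotone smoothPosPart :=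
  monotone_of_deriv_nonneg differentiable_smoothPosPart fun t => by
    rw [deriv_smoothPosPart]
    exact smoothTransition.nonneg t

lemma convexOn_smoothPosPart : ConvexOn ℝ Set.univ smoothPosPart :=
  Monotone.convexOn_univ_of_deriv differentiable_smoothPosPart
    (deriv_smoothPosPart ▸ smoothTransition.monotone)

lemma smoothPosPart_eq_zero {t : ℝ} (ht : t ≤ 0) : smoothPosPart t = 0 := by
  have hvanish : Set.EqOn smoothTransition 0 (Set.uIcc 0 t) := fun s hs =>
    smoothTransition.zero_of_nonpos (by rw [Set.uIcc_of_ge ht] at hs; exact hs.2)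
  simp [smoothPosPart, intervalIntegral.integral_congr hvanish]

lemma smoothPosPart_nonneg (t : ℝ) : 0 ≤ smoothPosPart t := by
  rcases le_total t 0 with ht | ht
  · exact (smoothPosPart_eq_zero ht).ge
  · exact intervalIntegral.integral_nonneg ht fun s _ => smoothTransition.nonneg s

lemma smoothPosPart_pos {t : ℝ} (ht : 0 < t) : 0 < smoothPosPart t :=
  intervalIntegral.intervalIntegral_pos_of_pos_on
    (smoothTransition.continuous.intervalIntegrable 0 t)
    (fun _ hs => smoothTransition.pos_of_pos hs.1) ht

lemma smoothPosPart_le_max (t : ℝ) : smoothPosPart t ≤ max t 0 := by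
  rcases le_total t 0 with ht | ht
  · exact (smoothPosPart_eq_zero ht).trans_le (le_max_right _ _)
  · refine le_max_of_le_left ?_
    calc smoothPosPart t ≤ ∫ _ in 0..t, (1 : ℝ) :=
          intervalIntegral.integral_mono_on ht
            (smoothTransition.continuous.intervalIntegrable 0 t) intervalIntegrable_const
            fun s _ => smoothTransition.le_one s
      _ = t := by simp

/-- A convex `C²` function with `0 ≤ truncatedSq t ≤ t ^ 2` that vanishes for `|t| ≤ 1`. Since it
vanishes near `0`, composing it with a function that is harmonic only off its zero set gives a
`C²` function. -/
def truncatedSq (t : ℝ) : ℝ := smoothPosPart (t ^ 2 - 1)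

lemma contDiff_truncatedSq : ContDiff ℝ 2 truncatedSq :=
  contDiff_smoothPosPart.comp (by fun_prop)

lemma convexOn_truncatedSq : ConvexOn ℝ Set.univ truncatedSq := by
  have himage : Convex ℝ ((fun t : ℝ => t ^ 2 - 1) '' Set.univ) :=
    (isPreconnected_univ.image _ (by fun_prop)).ordConnected.convex
  exact (convexOn_smoothPosPart.subset (Set.subset_univ _) himage).comp
    (even_two.convexOn_pow.sub (concaveOn_const 1 convex_univ))
    (monotone_smoothPosPart.monotoneOn _)

lemma truncatedSq_nonneg (t : ℝ) : 0 ≤ truncatedSq t := smoothPosPart_nonneg _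

lemma truncatedSq_le_sq (t : ℝ) : truncatedSq t ≤ t ^ 2 :=
  (smoothPosPart_le_max _).trans (max_le (by linarith) (sq_nonneg t))

lemma truncatedSq_eq_zero {t : ℝ} (ht : |t| ≤ 1) : truncatedSq t = 0 :=
  smoothPosPart_eq_zero (sub_nonpos.2 ((sq_le_one_iff_abs_le_one t).2 ht))

lemma truncatedSq_pos {t : ℝ} (ht : 1 < |t|) : 0 < truncatedSq t :=
  smoothPosPart_pos (sub_pos.2 ((one_lt_sq_iff_one_lt_abs t).2 ht))

end SmoothPosPart

section Laplacian

open InnerProductSpace Laplacian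
open scoped Topology Gradient

variable {E : Type*} [NormedAddCommGroup E] [InnerProductSpace ℝ E] [FiniteDimensional ℝ E]

lemma laplacian_eq_sum_fderiv_fderiv {ι : Type*} [Fintype ι] (b : OrthonormalBasis ι ℝ E)
    {f : E → ℝ} {x : E} (hf : ContDiffAt ℝ 2 f x) :
    Δ f x = ∑ i, fderiv ℝ (fun y => fderiv ℝ f y (b i)) x (b i) := by
  have hd : DifferentiableAt ℝ (fderiv ℝ f) x :=
    (hf.fderiv_right (m := 1) (by norm_num)).differentiableAt one_ne_zero
  simp [laplacian_eq_iteratedFDeriv_orthonormalBasis f b, iteratedFDeriv_two_apply,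
    fderiv_clm_apply hd (differentiableAt_const _)]

lemma laplacian_eq_lap {d : ℕ} {f : EuclideanSpace ℝ (Fin d) → ℝ} {x : EuclideanSpace ℝ (Fin d)}
    (hf : ContDiffAt ℝ 2 f x) : Δ f x = lap d f x := by
  simp [laplacian_eq_sum_fderiv_fderiv (EuclideanSpace.basisFun (Fin d) ℝ) hf, lap]

lemma laplacian_comp_add_smul {f : E → ℝ} (hf : ContDiff ℝ 2 f) (y : E) (t : ℝ) (x : E) :
    Δ (fun z => f (y + t • z)) x = t ^ 2 * Δ f (y + t • x) := by
  have hf' : ContDiff ℝ 2 fun z => f (y + z) := hf.comp (contDiff_const.add contDiff_id)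
  simp [laplacian_eq_iteratedFDeriv_stdOrthonormalBasis,
    iteratedFDeriv_comp_const_smul t hf', iteratedFDeriv_comp_add_left, Finset.mul_sum]

lemma laplacian_comp {f : E → ℝ} {g : ℝ → ℝ} {x : E} (hg : ContDiff ℝ 2 g)
    (hf : ContDiffAt ℝ 2 f x) :
    Δ (g ∘ f) x = deriv (deriv g) (f x) * ‖∇ f x‖ ^ 2 + deriv g (f x) * Δ f x := by
  set b := stdOrthonormalBasis ℝ E
  rw [laplacian_eq_sum_fderiv_fderiv b (hg.contDiffAt.comp x hf),
    laplacian_eq_sum_fderiv_fderiv b hf, ← b.sum_sq_norm_inner_left, Finset.mul_sum,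
    Finset.mul_sum, ← Finset.sum_add_distrib]
  refine Finset.sum_congr rfl fun i _ => ?_
  have hfd : DifferentiableAt ℝ f x := hf.differentiableAt two_ne_zero
  have hderiv : DifferentiableAt ℝ (deriv g) (f x) :=
    hg.differentiable_deriv_two _
  have hfderiv : DifferentiableAt ℝ (fun y => fderiv ℝ f y (b i)) x :=
    ((hf.fderiv_right (m := 1) (by norm_num)).differentiableAt one_ne_zero).clm_apply
      (differentiableAt_const _)
  have hchain : (fun y => fderiv ℝ (g ∘ f) y (b i)) =ᶠ[𝓝 x]
      fun y => (deriv g ∘ f) y * fderiv ℝ f y (b i) := by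
    filter_upwards [hf.eventually (by simp)] with y hy
    rw [fderiv_comp y (hg.differentiable two_ne_zero _) (hy.differentiableAt two_ne_zero)]
    simp [mul_comm]
  rw [hchain.fderiv_eq, fderiv_fun_mul (hderiv.comp x hfd) hfderiv, fderiv_comp x hderiv hfd]
  simp only [Function.comp_apply, add_apply, smul_apply, smul_eq_mul,
    ContinuousLinearMap.comp_apply, fderiv_eq_smul_deriv, inner_gradient_left, norm_eq_abs, sq_abs]
  ring

variable [MeasurableSpace E] [BorelSpace E] (μ : Measure E) [μ.IsAddHaarMeasure]

lemma integral_fderiv_gradient_eq_neg_integral_laplacian_mul {f ψ : E → ℝ}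
    (hf : ContDiff ℝ 2 f) (hψ : ContDiff ℝ 1 ψ) (hψc : HasCompactSupport ψ) :
    ∫ x, fderiv ℝ f x (∇ ψ x) ∂μ = -∫ x, Δ f x * ψ x ∂μ := by
  set b := stdOrthonormalBasis ℝ E
  have hf1 (i) : ContDiff ℝ 1 fun y => fderiv ℝ f y (b i) :=
    (hf.fderiv_right (m := 1) (by norm_num)).clm_apply contDiff_const
  have hf2 (i) : Continuous fun x => fderiv ℝ (fun y => fderiv ℝ f y (b i)) x (b i) :=
    ((hf1 i).continuous_fderiv one_ne_zero).clm_apply continuous_const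
  have hψ1 (i) : Continuous fun x => fderiv ℝ ψ x (b i) :=
    (hψ.continuous_fderiv one_ne_zero).clm_apply continuous_const
  have hψ1c (i) : HasCompactSupport fun x => fderiv ℝ ψ x (b i) := hψc.fderiv_apply ℝ (b i)
  have hint1 (i) : Integrable (fun x => fderiv ℝ f x (b i) * fderiv ℝ ψ x (b i)) μ :=
    ((hf1 i).continuous.mul (hψ1 i)).integrable_of_hasCompactSupport (hψ1c i).mul_left
  have hint2 (i) : Integrable (fun x => fderiv ℝ (fun y => fderiv ℝ f y (b i)) x (b i) * ψ x) μ :=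
    ((hf2 i).mul hψ.continuous).integrable_of_hasCompactSupport hψc.mul_left
  have hint3 (i) : Integrable (fun x => fderiv ℝ f x (b i) * ψ x) μ :=
    ((hf1 i).continuous.mul hψ.continuous).integrable_of_hasCompactSupport hψc.mul_left
  have hinner (x : E) : fderiv ℝ f x (∇ ψ x) = ∑ i, fderiv ℝ f x (b i) * fderiv ℝ ψ x (b i) := by
    rw [← inner_gradient_left, ← b.sum_inner_mul_inner]
    simp [inner_gradient_left, inner_gradient_right]
  calc ∫ x, fderiv ℝ f x (∇ ψ x) ∂μ
      = ∑ i, ∫ x, fderiv ℝ f x (b i) * fderiv ℝ ψ x (b i) ∂μ := by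
        simp_rw [hinner]
        exact integral_finsetSum _ fun i _ => hint1 i
    _ = ∑ i, -∫ x, fderiv ℝ (fun y => fderiv ℝ f y (b i)) x (b i) * ψ x ∂μ :=
        Finset.sum_congr rfl fun i _ => integral_mul_fderiv_eq_neg_fderiv_mul_of_integrable
          (hint2 i) (hint1 i) (hint3 i) (fun x _ => (hf1 i).differentiable one_ne_zero x)
          fun x _ => hψ.differentiable one_ne_zero x
    _ = -∫ x, Δ f x * ψ x ∂μ := by
        simp_rw [laplacian_eq_sum_fderiv_fderiv b hf.contDiffAt, Finset.sum_mul]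
        rw [integral_finsetSum _ fun i _ => hint2 i, Finset.sum_neg_distrib]

end Laplacian

section MeanValue

open InnerProductSpace Laplacian Filter
open scoped Topology Gradient

variable {E : Type*} [NormedAddCommGroup E]

lemma exists_contDiff_eventuallyEq_nhdsSet [NormedSpace ℝ E] [FiniteDimensional ℝ E]
    {f : E → ℝ} {s K : Set E} (hf : ContDiffOn ℝ 2 f s) (hs : IsOpen s) (hK : IsClosed K)
    (hKs : K ⊆ s) :
    ∃ g : E → ℝ, ContDiff ℝ 2 g ∧ g =ᶠ[𝓝ˢ K] f := by
  obtain ⟨χ, hχ0, hχ1, -⟩ := exists_contMDiffMap_zero_one_nhds_of_isClosed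
    (modelWithCornersSelf ℝ E) (n := 2) hs.isClosed_compl hK
    (Set.disjoint_compl_left_iff_subset.2 hKs)
  refine ⟨fun x => χ x * f x, contDiff_iff_contDiffAt.2 fun x => ?_, ?_⟩
  · by_cases hx : x ∈ s
    · exact χ.contMDiff.contDiff.contDiffAt.mul (hf.contDiffAt (hs.mem_nhds hx))
    · have hzero : (fun x => χ x * f x) =ᶠ[𝓝 x] 0 := by
        filter_upwards [eventually_nhdsSet_iff_forall.1 hχ0 x hx] with z hz
        simp [hz]
      exact contDiffAt_const.congr_of_eventuallyEq hzero
  · filter_upwards [hχ1] with x hx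
    simp [hx]

/-- A smooth radial bump supported in the closed unit ball. -/
def radialBump (x : E) : ℝ := smoothTransition (1 - ‖x‖ ^ 2)

/-- A compactly supported radial potential of the field `-radialBump x • x`. -/
def radialBumpPotential (x : E) : ℝ := smoothPosPart (1 - ‖x‖ ^ 2) / 2

lemma radialBump_nonneg (x : E) : 0 ≤ radialBump x := smoothTransition.nonneg _

lemma radialBump_le_one (x : E) : radialBump x ≤ 1 := smoothTransition.le_one _

lemma continuous_radialBump : Continuous (radialBump : E → ℝ) :=
  smoothTransition.continuous.comp (by fun_prop)

lemma radialBump_eq_zero {x : E} (hx : 1 ≤ ‖x‖) : radialBump x = 0 :=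
  smoothTransition.zero_of_nonpos (sub_nonpos.2 (one_le_pow₀ hx))

lemma radialBumpPotential_eq_zero {x : E} (hx : 1 ≤ ‖x‖) : radialBumpPotential x = 0 := by
  simp [radialBumpPotential, smoothPosPart_eq_zero (sub_nonpos.2 (one_le_pow₀ hx))]

lemma radialBumpPotential_nonneg (x : E) : 0 ≤ radialBumpPotential x :=
  div_nonneg (smoothPosPart_nonneg _) zero_le_two

section FiniteDimensional

variable [NormedSpace ℝ E] [FiniteDimensional ℝ E]

lemma hasCompactSupport_of_forall_one_le_norm {f : E → ℝ} (hf : ∀ x, 1 ≤ ‖x‖ → f x = 0) :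
    HasCompactSupport f :=
  HasCompactSupport.intro (isCompact_closedBall 0 1) fun x hx =>
    hf x (by simpa using le_of_not_ge (by simpa using hx))

lemma hasCompactSupport_radialBump : HasCompactSupport (radialBump : E → ℝ) :=
  hasCompactSupport_of_forall_one_le_norm fun _ => radialBump_eq_zero

lemma hasCompactSupport_radialBumpPotential : HasCompactSupport (radialBumpPotential : E → ℝ) :=
  hasCompactSupport_of_forall_one_le_norm fun _ => radialBumpPotential_eq_zero

variable [MeasurableSpace E] [BorelSpace E] (μ : Measure E) [μ.IsAddHaarMeasure]

lemma integral_radialBump_pos : 0 < ∫ x : E, radialBump x ∂μ :=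
  continuous_radialBump.integral_pos_of_hasCompactSupport_nonneg_nonzero
    hasCompactSupport_radialBump radialBump_nonneg (x := 0)
    (by simp [radialBump])

variable {μ}

lemma hasDerivAt_integral_comp_add_smul_mul {w η : E → ℝ} (hw : ContDiff ℝ 1 w)
    (hη : Continuous η) (hηc : HasCompactSupport η) (y : E) (t : ℝ) :
    HasDerivAt (fun t => ∫ x, w (y + t • x) * η x ∂μ)
      (∫ x, fderiv ℝ w (y + t • x) x * η x ∂μ) t := by
  have hw0 := hw.continuous
  have hw1 : Continuous fun p : ℝ × E => fderiv ℝ w (y + p.1 • p.2) p.2 :=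
    ((hw.continuous_fderiv one_ne_zero).comp (by fun_prop)).clm_apply continuous_snd
  obtain ⟨C, hC⟩ := ((isCompact_closedBall t 1).prod hηc).exists_bound_of_continuousOn
    hw1.continuousOn
  have hderiv (x : E) (t : ℝ) :
      HasDerivAt (fun t => w (y + t • x) * η x) (fderiv ℝ w (y + t • x) x * η x) t := by
    have hline : HasDerivAt (fun t : ℝ => y + t • x) x t := by
      simpa using ((hasDerivAt_id t).smul_const x).const_add y
    exact ((hw.differentiable one_ne_zero _).hasFDerivAt.comp_hasDerivAt t hline).mul_const (η x)
  refine (hasDerivAt_integral_of_dominated_loc_of_deriv_le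
    (F := fun t x => w (y + t • x) * η x)
    (F' := fun t x => fderiv ℝ w (y + t • x) x * η x) (bound := fun x => C * ‖η x‖)
    (closedBall_mem_nhds t one_pos) ?_ ?_ ?_ ?_ ?_ ?_).2
  · exact Eventually.of_forall fun t => by fun_prop
  · exact Continuous.integrable_of_hasCompactSupport (by fun_prop) hηc.mul_left
  · exact ((hw1.comp (by fun_prop : Continuous fun x : E => (t, x))).mul hη).aestronglyMeasurable
  · refine Eventually.of_forall fun x s hs => ?_
    rw [norm_mul]
    by_cases hx : x ∈ tsupport η
    · exact mul_le_mul_of_nonneg_right (hC (s, x) ⟨hs, hx⟩) (norm_nonneg _)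
    · simp [image_eq_zero_of_notMem_tsupport hx]
  · exact (hη.norm.integrable_of_hasCompactSupport hηc.norm).const_mul C
  · exact Eventually.of_forall fun x s _ => hderiv x s

end FiniteDimensional

variable [InnerProductSpace ℝ E]

lemma hasGradientAt_radialBumpPotential [CompleteSpace E] (x : E) :
    HasGradientAt radialBumpPotential (-radialBump x • x) x := by
  have hnorm : HasFDerivAt (fun x : E => 1 - ‖x‖ ^ 2) (-(2 • innerSL ℝ x)) x :=
    (hasStrictFDerivAt_norm_sq x).hasFDerivAt.const_sub 1
  rw [hasGradientAt_iff_hasFDerivAt]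
  refine (((hasDerivAt_smoothPosPart _).comp_hasFDerivAt x hnorm).mul_const 2⁻¹).congr_fderiv ?_
  ext z
  simp only [smul_neg, neg_apply, smul_apply, coe_innerSL_apply, nsmul_eq_mul, Nat.cast_ofNat,
    smul_eq_mul, radialBump, neg_smul, map_neg, map_smul, toDual_apply_apply, neg_inj]
  ring

lemma gradient_radialBumpPotential [CompleteSpace E] (x : E) :
    ∇ radialBumpPotential x = -radialBump x • x :=
  (hasGradientAt_radialBumpPotential x).gradient

lemma contDiff_radialBumpPotential [CompleteSpace E] :
    ContDiff ℝ 1 (radialBumpPotential : E → ℝ) := by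
  refine contDiff_one_iff_fderiv.2
    ⟨fun x => (hasGradientAt_radialBumpPotential x).differentiableAt, ?_⟩
  have hfderiv : fderiv ℝ (radialBumpPotential : E → ℝ) =
      fun x => toDual ℝ E (-radialBump x • x) :=
    funext fun x => (hasGradientAt_radialBumpPotential x).hasFDerivAt.fderiv
  rw [hfderiv]
  exact (toDual ℝ E).continuous.comp (continuous_radialBump.neg.smul continuous_id)

variable [FiniteDimensional ℝ E] [MeasurableSpace E] [BorelSpace E] {μ : Measure E}
  [μ.IsAddHaarMeasure]

lemma integral_fderiv_mul_radialBump {w : E → ℝ} (hw : ContDiff ℝ 2 w) (y : E) {t : ℝ}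
    (ht : t ≠ 0) :
    ∫ x, fderiv ℝ w (y + t • x) x * radialBump x ∂μ =
      t * ∫ x, Δ w (y + t • x) * radialBumpPotential x ∂μ := by
  have hfderiv (x : E) : fderiv ℝ (fun x => w (y + t • x)) x (∇ radialBumpPotential x) =
      -t * (fderiv ℝ w (y + t • x) x * radialBump x) := by
    rw [fderiv_comp_smul (f := fun z => w (y + z)), fderiv_comp_add_left,
      gradient_radialBumpPotential]
    simp only [smul_apply, map_smul, smul_eq_mul]
    ring
  have hdilate : ContDiff ℝ 2 fun x => w (y + t • x) := by fun_prop
  have hgreen := integral_fderiv_gradient_eq_neg_integral_laplacian_mul μ hdilate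
    contDiff_radialBumpPotential hasCompactSupport_radialBumpPotential
  simp_rw [hfderiv, laplacian_comp_add_smul hw, mul_assoc] at hgreen
  rw [integral_const_mul, integral_const_mul] at hgreen
  refine mul_left_cancel₀ ht ?_
  linarith

lemma mul_integral_radialBump_le {w : E → ℝ} (hw : ContDiff ℝ 2 w) {y : E} {ρ : ℝ} (hρ : 0 ≤ ρ)
    (hΔ : ∀ x ∈ ball y ρ, 0 ≤ Δ w x) :
    w y * ∫ x, radialBump x ∂μ ≤ ∫ x, w (y + ρ • x) * radialBump x ∂μ := by
  have hderiv (t : ℝ) := hasDerivAt_integral_comp_add_smul_mul (μ := μ) (hw.of_le one_le_two)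
    continuous_radialBump hasCompactSupport_radialBump y t
  have hmono : MonotoneOn (fun t : ℝ => ∫ x, w (y + t • x) * radialBump x ∂μ) (Set.Icc 0 ρ) := by
    refine monotoneOn_of_hasDerivWithinAt_nonneg (convex_Icc 0 ρ)
      (fun t _ => (hderiv t).continuousAt.continuousWithinAt)
      (fun t _ => (hderiv t).hasDerivWithinAt) fun t ht => ?_
    rw [interior_Icc] at ht
    rw [integral_fderiv_mul_radialBump hw y ht.1.ne']
    refine mul_nonneg ht.1.le (integral_nonneg fun x => ?_)
    rcases le_total 1 ‖x‖ with hx | hx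
    · simp [radialBumpPotential_eq_zero hx]
    · refine mul_nonneg (hΔ _ ?_) (radialBumpPotential_nonneg x)
      rw [mem_ball, dist_self_add_left, norm_smul, norm_of_nonneg ht.1.le]
      exact (mul_le_of_le_one_right ht.1.le hx).trans_lt ht.2
  simpa [integral_const_mul] using
    hmono (Set.left_mem_Icc.2 hρ) (Set.right_mem_Icc.2 hρ) hρ

lemma mul_integral_radialBump_le_setAverage {w : E → ℝ} (hw : ContDiff ℝ 2 w) {y : E} {ρ : ℝ}
    (hρ : 0 < ρ) (hΔ : ∀ x ∈ ball y ρ, 0 ≤ Δ w x) (hw0 : ∀ x ∈ ball y ρ, 0 ≤ w x) :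
    w y * ∫ x, radialBump x ∂μ ≤ μ.real (ball (0 : E) 1) * ⨍ x in ball y ρ, w x ∂μ := by
  have hdilate : Continuous fun x => w (y + ρ • x) := by fun_prop
  have hmem {x : E} (hx : x ∈ ball (0 : E) 1) : y + ρ • x ∈ ball y ρ := by
    rw [mem_ball, dist_self_add_left, norm_smul, norm_of_nonneg hρ.le]
    exact mul_lt_of_lt_one_right hρ (mem_ball_zero_iff.1 hx)
  have hsupport : ∀ x ∉ ball (0 : E) 1, w (y + ρ • x) * radialBump x = 0 := fun x hx => by
    rw [radialBump_eq_zero (by simpa using hx), mul_zero]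
  calc w y * ∫ x, radialBump x ∂μ
      ≤ ∫ x, w (y + ρ • x) * radialBump x ∂μ := mul_integral_radialBump_le hw hρ.le hΔ
    _ = ∫ x in ball 0 1, w (y + ρ • x) * radialBump x ∂μ :=
        (setIntegral_eq_integral_of_forall_compl_eq_zero hsupport).symm
    _ ≤ ∫ x in ball 0 1, w (y + ρ • x) ∂μ := by
        refine setIntegral_mono_on ?_ ?_ measurableSet_ball fun x hx =>
          mul_le_of_le_one_right (hw0 _ (hmem hx)) (radialBump_le_one x)
        · exact ((hdilate.mul continuous_radialBump).integrable_of_hasCompactSupport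
            hasCompactSupport_radialBump.mul_left).integrableOn
        · exact integrableOn_ball_of_continuousOn_closedBall hdilate.continuousOn
    _ = μ.real (ball 0 1) * ⨍ x in ball y ρ, w x ∂μ := by
        rw [setAverage_ball_eq_setAverage_unitBall w y hρ, setAverage_eq, smul_eq_mul,
          mul_inv_cancel_left₀ (addHaar_real_unitBall_pos μ).ne']

variable (μ) in
lemma exists_le_mul_setAverage_ball_of_laplacian_nonneg :
    ∃ C > 0, ∀ {w : E → ℝ} {s : Set E} {y : E} {ρ : ℝ}, IsOpen s → ContDiffOn ℝ 2 w s → 0 < ρ →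
      closedBall y ρ ⊆ s → (∀ x ∈ ball y ρ, 0 ≤ Δ w x) → (∀ x ∈ ball y ρ, 0 ≤ w x) →
        w y ≤ C * ⨍ x in ball y ρ, w x ∂μ := by
  have hbump := integral_radialBump_pos μ
  refine ⟨μ.real (ball 0 1) / ∫ x : E, radialBump x ∂μ,
    div_pos (addHaar_real_unitBall_pos μ) hbump, ?_⟩
  intro w s y ρ hs hw hρ hsub hΔ hw0
  obtain ⟨g, hg, hgw⟩ := exists_contDiff_eventuallyEq_nhdsSet hw hs isClosed_closedBall hsub
  have heq {x : E} (hx : x ∈ closedBall y ρ) : g =ᶠ[𝓝 x] w :=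
    eventually_nhdsSet_iff_forall.1 hgw x hx
  have hball {x : E} (hx : x ∈ ball y ρ) : g x = w x :=
    (heq (ball_subset_closedBall hx)).self_of_nhds
  have hgΔ : ∀ x ∈ ball y ρ, 0 ≤ Δ g x := fun x hx => by
    rw [(laplacian_congr_nhds (heq (ball_subset_closedBall hx))).self_of_nhds]
    exact hΔ x hx
  rw [← setAverage_congr_fun measurableSet_ball (ae_of_all _ fun x hx => hball hx),
    ← hball (mem_ball_self hρ), div_mul_eq_mul_div, le_div_iff₀ hbump]
  exact mul_integral_radialBump_le_setAverage hg hρ hgΔ fun x hx => (hw0 x hx).trans_eq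
    (hball hx).symm

end MeanValue

section HarmonicOffZeros

open InnerProductSpace Laplacian Filter
open scoped Topology Gradient

variable {E : Type*} [NormedAddCommGroup E] [InnerProductSpace ℝ E] [FiniteDimensional ℝ E]

lemma laplacian_comp_nonneg {f : E → ℝ} {g : ℝ → ℝ} {x : E} (hg : ContDiff ℝ 2 g)
    (hconv : ConvexOn ℝ Set.univ g) (hf : HarmonicAt f x) : 0 ≤ Δ (g ∘ f) x := by
  have hmono : Monotone (deriv g) := monotoneOn_univ.1 <|
    hconv.monotoneOn_deriv fun t _ => hg.differentiable two_ne_zero t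
  have hΔ : Δ f x = 0 := hf.2.self_of_nhds
  rw [laplacian_comp hg hf.1, hΔ, mul_zero, add_zero]
  exact mul_nonneg hmono.deriv_nonneg (sq_nonneg _)

/-- `f` is continuous on `s` and harmonic at every point of `s` where it does not vanish, as is the
extension by zero of a harmonic function with zero boundary values. -/
structure HarmonicOffZeros (f : E → ℝ) (s : Set E) : Prop where
  continuousOn : ContinuousOn f s
  harmonicAt : ∀ x ∈ s, f x ≠ 0 → HarmonicAt f x

namespace HarmonicOffZeros

variable {f : E → ℝ} {s : Set E}

lemma const_mul (hf : HarmonicOffZeros f s) (c : ℝ) : HarmonicOffZeros (fun x => c * f x) s :=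
  ⟨hf.continuousOn.const_mul c,
    fun x hx hne => (hf.harmonicAt x hx (right_ne_zero_of_mul hne)).const_smul⟩

lemma harmonicAt_or_truncatedSq_comp_eventuallyEq_zero (hf : HarmonicOffZeros f s) {x : E}
    (hx : s ∈ 𝓝 x) : HarmonicAt f x ∨ truncatedSq ∘ f =ᶠ[𝓝 x] fun _ => 0 := by
  by_cases hfx : f x = 0
  · right
    have hcont : ContinuousAt (fun y => |f y|) x := (hf.continuousOn.continuousAt hx).abs
    filter_upwards [hcont.eventually_lt_const (u := 1) (by simp [hfx])] with y hy
    exact truncatedSq_eq_zero hy.le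
  · exact .inl (hf.harmonicAt x (mem_of_mem_nhds hx) hfx)

lemma contDiffOn_truncatedSq_comp (hf : HarmonicOffZeros f s) (hs : IsOpen s) :
    ContDiffOn ℝ 2 (truncatedSq ∘ f) s := fun x hx => by
  refine ContDiffAt.contDiffWithinAt ?_
  rcases hf.harmonicAt_or_truncatedSq_comp_eventuallyEq_zero (hs.mem_nhds hx) with hfx | hzero
  · exact contDiff_truncatedSq.contDiffAt.comp x hfx.1
  · exact contDiffAt_const.congr_of_eventuallyEq hzero

lemma laplacian_truncatedSq_comp_nonneg (hf : HarmonicOffZeros f s) {x : E} (hx : s ∈ 𝓝 x) :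
    0 ≤ Δ (truncatedSq ∘ f) x := by
  rcases hf.harmonicAt_or_truncatedSq_comp_eventuallyEq_zero hx with hfx | hzero
  · exact laplacian_comp_nonneg contDiff_truncatedSq convexOn_truncatedSq hfx
  · have hconst := (harmonicAt_congr_nhds hzero).2 (harmonicAt_const 0)
    exact hconst.2.self_of_nhds.ge

section Measure

variable [MeasurableSpace E] [BorelSpace E] (μ : Measure E) [μ.IsAddHaarMeasure]

lemma exists_sq_le_mul_setAverage_ball :
    ∃ C > 0, ∀ {f : E → ℝ} {s : Set E} {y : E} {ρ : ℝ}, HarmonicOffZeros f s → IsOpen s → 0 < ρ →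
      closedBall y ρ ⊆ s → f y ^ 2 ≤ C * ⨍ x in ball y ρ, f x ^ 2 ∂μ := by
  obtain ⟨C, hC, hmean⟩ := exists_le_mul_setAverage_ball_of_laplacian_nonneg μ
  have htwo : 0 < truncatedSq 2 := truncatedSq_pos (by norm_num)
  refine ⟨C * 4 / truncatedSq 2, by positivity, fun {f s y ρ} hf hs hρ hsub => ?_⟩
  have havg : 0 ≤ ⨍ x in ball y ρ, f x ^ 2 ∂μ := setAverage_nonneg _ fun x => sq_nonneg (f x)
  rcases eq_or_ne (f y) 0 with hfy | hfy
  · rw [hfy, zero_pow two_ne_zero]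
    exact mul_nonneg (by positivity) havg
  -- Normalize so that the function equals `2` at `y`, where `truncatedSq` is positive.
  set g : E → ℝ := fun x => 2 / f y * f x
  have hg : HarmonicOffZeros g s := hf.const_mul _
  have hgy : g y = 2 := div_mul_cancel₀ 2 hfy
  have hcont : ContinuousOn g (closedBall y ρ) := hg.continuousOn.mono hsub
  have htrunc : truncatedSq 2 ≤ C * (4 / f y ^ 2 * ⨍ x in ball y ρ, f x ^ 2 ∂μ) := calc
    truncatedSq 2 = (truncatedSq ∘ g) y := by rw [Function.comp_apply, hgy]
    _ ≤ C * ⨍ x in ball y ρ, (truncatedSq ∘ g) x ∂μ :=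
        hmean hs (hg.contDiffOn_truncatedSq_comp hs) hρ hsub
          (fun x hx => hg.laplacian_truncatedSq_comp_nonneg
            (hs.mem_nhds (hsub (ball_subset_closedBall hx))))
          fun x _ => truncatedSq_nonneg _
    _ ≤ C * ⨍ x in ball y ρ, g x ^ 2 ∂μ := by
        refine mul_le_mul_of_nonneg_left ?_ hC.le
        exact setAverage_mono_on measurableSet_ball
          (integrableOn_ball_of_continuousOn_closedBall
            (contDiff_truncatedSq.continuous.comp_continuousOn hcont))
          (integrableOn_ball_of_continuousOn_closedBall (hcont.pow 2))
          fun x _ => truncatedSq_le_sq (g x)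
    _ = C * (4 / f y ^ 2 * ⨍ x in ball y ρ, f x ^ 2 ∂μ) := by
        simp only [g, mul_pow, div_pow, setAverage_eq, integral_const_mul, smul_eq_mul]
        ring
  calc f y ^ 2 = truncatedSq 2 * f y ^ 2 / truncatedSq 2 := by field_simp
    _ ≤ C * (4 / f y ^ 2 * ⨍ x in ball y ρ, f x ^ 2 ∂μ) * f y ^ 2 / truncatedSq 2 := by gcongr
    _ = C * 4 / truncatedSq 2 * ⨍ x in ball y ρ, f x ^ 2 ∂μ := by field_simp

variable {μ}

lemma eq_zero_of_integrable_sq [Nontrivial E] (hf : HarmonicOffZeros f Set.univ)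
    (hint : Integrable (fun x => f x ^ 2) μ) : f = 0 := by
  obtain ⟨C, hC, hmean⟩ := exists_sq_le_mul_setAverage_ball μ
  funext y
  have hle : ∀ᶠ ρ in atTop, f y ^ 2 ≤ C * ((μ.real (ball y ρ))⁻¹ * ∫ x, f x ^ 2 ∂μ) := by
    filter_upwards [eventually_gt_atTop 0] with ρ hρ
    refine (hmean hf isOpen_univ hρ (Set.subset_univ _)).trans
      (mul_le_mul_of_nonneg_left ?_ hC.le)
    rw [setAverage_eq, smul_eq_mul]
    exact mul_le_mul_of_nonneg_left
      (setIntegral_le_integral hint (ae_of_all _ fun x => sq_nonneg (f x))) (by positivity)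
  have hvol : Tendsto (fun ρ => μ.real (ball y ρ)) atTop atTop := by
    have hdim : Module.finrank ℝ E ≠ 0 := Module.finrank_pos.ne'
    refine ((tendsto_pow_atTop hdim).atTop_mul_const (addHaar_real_unitBall_pos μ)).congr' ?_
    filter_upwards [eventually_gt_atTop 0] with ρ hρ
    rw [addHaar_real_ball_of_pos μ y hρ]
  have hlim := (hvol.inv_tendsto_atTop.mul_const (∫ x, f x ^ 2 ∂μ)).const_mul C
  rw [zero_mul, mul_zero] at hlim
  exact pow_eq_zero_iff two_ne_zero |>.1 ((ge_of_tendsto hlim hle).antisymm (sq_nonneg _))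

end Measure

lemma indicator (hf : HarmonicOffZeros f s) {U : Set E} (hU : IsOpen U) (hUs : closure U ⊆ s)
    (hzero : ∀ x ∈ frontier U, f x = 0) : HarmonicOffZeros (U.indicator f) Set.univ := by
  refine ⟨(continuous_indicator hzero (hf.continuousOn.mono hUs)).continuousOn, fun x _ hx => ?_⟩
  have hxU : x ∈ U := Set.mem_of_indicator_ne_zero hx
  have heq : U.indicator f =ᶠ[𝓝 x] f := eventually_of_mem (hU.mem_nhds hxU) fun y hy =>
    Set.indicator_of_mem hy f
  rw [harmonicAt_congr_nhds heq]
  exact hf.harmonicAt x (hUs (subset_closure hxU)) (heq.self_of_nhds ▸ hx)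

lemma eq_zero_of_frontier_eq_zero [Nontrivial E] (hf : HarmonicOffZeros f s) {U : Set E}
    (hU : IsOpen U) (hbdd : Bornology.IsBounded U) (hUs : closure U ⊆ s)
    (hzero : ∀ x ∈ frontier U, f x = 0) : Set.EqOn f 0 U := by
  borelize E
  have hind := hf.indicator hU hUs hzero
  have hcont : Continuous (U.indicator f) := continuousOn_univ.1 hind.continuousOn
  have hsupport : HasCompactSupport fun x => U.indicator f x ^ 2 :=
    HasCompactSupport.intro hbdd.isCompact_closure fun x hx => by
      rw [Set.indicator_of_notMem (fun hxU => hx (subset_closure hxU)), zero_pow two_ne_zero]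
  have hind0 := hind.eq_zero_of_integrable_sq (μ := Measure.addHaar)
    ((hcont.pow 2).integrable_of_hasCompactSupport hsupport)
  intro x hx
  rw [← Set.indicator_of_mem hx f, hind0]

end HarmonicOffZeros

lemma harmonicOffZeros_of_lap_eq_zero {d : ℕ} {u : EuclideanSpace ℝ (Fin d) → ℝ}
    {Ω s : Set (EuclideanSpace ℝ (Fin d))} (hΩ : IsOpen Ω) (hs : IsOpen s)
    (hcont : ContinuousOn u s) (hreg : ContDiffOn ℝ 2 u (Ω ∩ s))
    (hharm : ∀ x ∈ Ω ∩ s, lap d u x = 0) (hzero : ∀ x ∈ s, x ∉ Ω → u x = 0) :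
    HarmonicOffZeros u s := by
  refine ⟨hcont, fun x hx hux => ?_⟩
  have hxΩ : x ∈ Ω ∩ s := ⟨by_contra fun hxΩ => hux (hzero x hx hxΩ), hx⟩
  have hreg' {z} (hz : z ∈ Ω ∩ s) : ContDiffAt ℝ 2 u z :=
    hreg.contDiffAt ((hΩ.inter hs).mem_nhds hz)
  refine ⟨hreg' hxΩ, ?_⟩
  filter_upwards [(hΩ.inter hs).mem_nhds hxΩ] with z hz
  rw [laplacian_eq_lap (hreg' hz), hharm z hz, Pi.zero_apply]

end HarmonicOffZeros

section Sphere

open Filter Module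
open scoped Topology Submodule

variable {E : Type*} [NormedAddCommGroup E] [InnerProductSpace ℝ E]

lemma exists_contDiff_chart_sphere {r : ℝ} (hr : 0 < r) {x : E} (hx : x ∈ sphere (0 : E) r) :
    ∃ (φ : (ℝ ∙ x)ᗮ → E) (ψ : E → (ℝ ∙ x)ᗮ), ContDiff ℝ 1 φ ∧ ContDiffAt ℝ 1 ψ x ∧
      (∀ y, φ y ∈ sphere 0 r) ∧ Function.LeftInverse ψ φ ∧
      ∀ᶠ z in 𝓝[sphere 0 r] x, φ (ψ z) = z := by
  have hxr : ‖x‖ = r := mem_sphere_zero_iff_norm.1 hx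
  set v : E := -(r⁻¹ • x)
  have hv : ‖v‖ = 1 := by simp [v, norm_smul, hxr, abs_of_pos hr, hr.ne']
  have hspan : (ℝ ∙ v) = ℝ ∙ x := by
    rw [show v = (-r⁻¹) • x from (neg_smul _ _).symm]
    exact Submodule.span_singleton_smul_eq (neg_ne_zero.2 (inv_ne_zero hr.ne')).isUnit x
  rw [← hspan]
  refine ⟨fun y => r • (stereoInvFun hv y : E), fun z => stereoToFun v (r⁻¹ • z),
    ?_, ?_, ?_, ?_, ?_⟩
  · exact (contDiff_stereoInvFunAux.comp (ℝ ∙ v)ᗮ.subtypeL.contDiff).const_smul r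
  · have hne : innerSL ℝ v (r⁻¹ • x) ≠ 1 := by
      rw [← neg_neg (r⁻¹ • x), map_neg, innerSL_apply_apply, real_inner_self_eq_norm_sq, hv]
      norm_num
    refine (contDiffOn_stereoToFun.contDiffAt ?_).comp x (contDiff_id.const_smul r⁻¹).contDiffAt
    exact (isOpen_ne_fun (innerSL ℝ v).continuous continuous_const).mem_nhds hne
  · intro y
    rw [mem_sphere_zero_iff_norm, norm_smul, norm_eq_of_mem_sphere, mul_one, norm_of_nonneg hr.le]
  · intro y
    simp only [inv_smul_smul₀ hr.ne']
    exact stereo_right_inv hv y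
  · have hne : ∀ᶠ z in 𝓝 x, r⁻¹ • z ≠ v := by
      refine (continuous_const_smul r⁻¹).continuousAt.eventually_ne fun h => ?_
      have hv0 : v = 0 := by
        rw [eq_neg_iff_add_eq_zero, ← two_smul ℝ, smul_eq_zero_iff_right two_ne_zero] at h
        simp only [v, h, neg_zero]
      simp [hv0] at hv
    filter_upwards [nhdsWithin_le_nhds hne, self_mem_nhdsWithin] with z hzv hz
    have hz1 : r⁻¹ • z ∈ sphere (0 : E) 1 := by
      simp [norm_smul, mem_sphere_zero_iff_norm.1 hz, abs_of_pos hr, hr.ne']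
    have hinv := congrArg Subtype.val (stereo_left_inv hv (x := ⟨r⁻¹ • z, hz1⟩) hzv)
    rw [hinv, smul_inv_smul₀ hr.ne']

lemma finrank_orthogonal_span_singleton_eq_sub_one [FiniteDimensional ℝ E] {x : E} (hx : x ≠ 0) :
    (finrank ℝ (ℝ ∙ x)ᗮ : ℝ) = finrank ℝ E - 1 := by
  have hsum := Submodule.finrank_add_finrank_orthogonal (ℝ ∙ x)
  rw [finrank_span_singleton hx] at hsum
  rw [← hsum, Nat.cast_add, Nat.cast_one, add_sub_cancel_left]

variable [FiniteDimensional ℝ E] [MeasurableSpace E] [BorelSpace E]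

lemma hausdorffMeasure_sphere_lt_top {r : ℝ} (hr : 0 < r) :
    μH[(finrank ℝ E : ℝ) - 1] (sphere (0 : E) r) < ∞ := by
  refine (isCompact_sphere _ _).measure_lt_top_of_nhdsWithin fun x hx => ?_
  obtain ⟨φ, ψ, hφ, hψ, -, -, hright⟩ := exists_contDiff_chart_sphere hr hx
  rw [← finrank_orthogonal_span_singleton_eq_sub_one (ne_of_mem_sphere hx hr.ne')]
  obtain ⟨K, hK⟩ := hφ.contDiffOn.exists_lipschitzOnWith one_ne_zero
    (convex_closedBall (ψ x) 1) (isCompact_closedBall _ _)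
  have hnear : ∀ᶠ z in 𝓝[sphere 0 r] x, ψ z ∈ closedBall (ψ x) 1 :=
    nhdsWithin_le_nhds (hψ.continuousAt (closedBall_mem_nhds _ one_pos))
  refine ⟨φ '' closedBall (ψ x) 1, ?_, (hK.hausdorffMeasure_image_le (by positivity)).trans_lt ?_⟩
  · filter_upwards [hright, hnear] with z hz hzn using ⟨ψ z, hzn, hz⟩
  · exact ENNReal.mul_lt_top (ENNReal.rpow_lt_top_of_nonneg (by positivity) ENNReal.coe_ne_top)
      (isCompact_closedBall _ _).measure_lt_top

lemma hausdorffMeasure_sphere_inter_pos {r : ℝ} (hr : 0 < r) {x : E}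
    (hx : x ∈ sphere (0 : E) r) {s : Set E} (hs : s ∈ 𝓝 x) :
    0 < μH[(finrank ℝ E : ℝ) - 1] (sphere 0 r ∩ s) := by
  obtain ⟨φ, ψ, hφ, hψ, hmem, hleft, hright⟩ := exists_contDiff_chart_sphere hr hx
  rw [← finrank_orthogonal_span_singleton_eq_sub_one (ne_of_mem_sphere hx hr.ne')]
  obtain ⟨K, t, ht, hK⟩ := hψ.exists_lipschitzOnWith
  have hφx : φ (ψ x) = x := hright.self_of_nhdsWithin hx
  have hopen : φ ⁻¹' (s ∩ t) ∈ 𝓝 (ψ x) :=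
    hφ.continuous.continuousAt (by rw [hφx]; exact Filter.inter_mem hs ht)
  have hsub : φ ⁻¹' (s ∩ t) ⊆ ψ '' (sphere 0 r ∩ s ∩ t) := fun y hy =>
    ⟨φ y, ⟨⟨hmem y, hy.1⟩, hy.2⟩, hleft y⟩
  have hle := (hK.mono Set.inter_subset_right).hausdorffMeasure_image_le
    (s := sphere 0 r ∩ s ∩ t) (d := finrank ℝ (ℝ ∙ x)ᗮ) (by positivity)
  have hpos := (Measure.measure_pos_of_mem_nhds _ hopen).trans_le ((measure_mono hsub).trans hle)
  exact (pos_of_mul_pos_right hpos zero_le).trans_le (measure_mono Set.inter_subset_left)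

end Sphere

section SphericalAverage

open Module
open scoped Topology

variable {E : Type*} [NormedAddCommGroup E] [InnerProductSpace ℝ E] [FiniteDimensional ℝ E]
  [MeasurableSpace E] [BorelSpace E] {f : E → ℝ} {r : ℝ}

lemma integrableOn_sphere_of_continuousOn (hr : 0 < r) (hf : ContinuousOn f (sphere 0 r)) :
    IntegrableOn f (sphere 0 r) μH[(finrank ℝ E : ℝ) - 1] :=
  hf.integrableOn_of_subset_isCompact (isCompact_sphere 0 r) isClosed_sphere.measurableSet
    subset_rfl (hausdorffMeasure_sphere_lt_top hr).ne

lemma hausdorffMeasure_sphere_pos [Nontrivial E] (hr : 0 < r) :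
    0 < μH[(finrank ℝ E : ℝ) - 1] (sphere (0 : E) r) := by
  obtain ⟨x, hx⟩ := (NormedSpace.sphere_nonempty (x := (0 : E)) (r := r)).2 hr.le
  simpa using hausdorffMeasure_sphere_inter_pos hr hx Filter.univ_mem

lemma exists_mem_sphere_setAverage_le [Nontrivial E] (hr : 0 < r)
    (hf : ContinuousOn f (sphere 0 r)) :
    ∃ x ∈ sphere 0 r, ⨍ y in sphere 0 r, f y ∂μH[(finrank ℝ E : ℝ) - 1] ≤ f x :=
  exists_setAverage_le (hausdorffMeasure_sphere_pos hr).ne'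
    (hausdorffMeasure_sphere_lt_top hr).ne (integrableOn_sphere_of_continuousOn hr hf)

lemma setAverage_sphere_pos (hr : 0 < r) (hf : ContinuousOn f (sphere 0 r)) (hf0 : 0 ≤ f)
    (hne : ∃ x ∈ sphere 0 r, f x ≠ 0) :
    0 < ⨍ y in sphere 0 r, f y ∂μH[(finrank ℝ E : ℝ) - 1] := by
  obtain ⟨x, hx, hfx⟩ := hne
  obtain ⟨s, hs, hsub⟩ := mem_nhdsWithin_iff_exists_mem_nhds_inter.1
    ((hf x hx).eventually_ne hfx)
  have hsupport : sphere 0 r ∩ s ⊆ Function.support f ∩ sphere 0 r := fun y hy =>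
    ⟨hsub ⟨hy.2, hy.1⟩, hy.1⟩
  have hpos := hausdorffMeasure_sphere_inter_pos hr hx hs
  rw [setAverage_eq]
  refine mul_pos (inv_pos.2 (ENNReal.toReal_pos ?_ (hausdorffMeasure_sphere_lt_top hr).ne)) ?_
  · exact (hpos.trans_le (measure_mono Set.inter_subset_left)).ne'
  · rw [setIntegral_pos_iff_support_of_nonneg_ae (Filter.Eventually.of_forall hf0)
      (integrableOn_sphere_of_continuousOn hr hf)]
    exact hpos.trans_le (measure_mono hsupport)

namespace HarmonicOffZeros

variable [Nontrivial E]

lemma setAverage_sphere_sq_pos {s : Set E} (hf : HarmonicOffZeros f s) (hr : 0 < r)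
    (hsub : closedBall 0 r ⊆ s) (hne : ∃ x ∈ ball 0 r, f x ≠ 0) :
    0 < ⨍ y in sphere 0 r, f y ^ 2 ∂μH[(finrank ℝ E : ℝ) - 1] := by
  refine setAverage_sphere_pos hr
    ((hf.continuousOn.mono (sphere_subset_closedBall.trans hsub)).pow 2)
    (fun x => sq_nonneg (f x)) ?_
  by_contra! hzero
  obtain ⟨x, hx, hfx⟩ := hne
  refine hfx (hf.eq_zero_of_frontier_eq_zero isOpen_ball isBounded_ball
    ((closure_ball_subset_closedBall).trans hsub) (fun y hy => ?_) hx)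
  rw [frontier_ball 0 hr.ne'] at hy
  exact (pow_eq_zero_iff two_ne_zero).1 (hzero y hy)

lemma exists_setAverage_sphere_sq_le (μ : Measure E) [μ.IsAddHaarMeasure] :
    ∃ C > 0, ∀ {f : E → ℝ} {U : Set E} {s r : ℝ}, HarmonicOffZeros f U → IsOpen U → 0 < s →
      2 * s ≤ r → closedBall 0 r ⊆ U → ⨍ y in sphere 0 s, f y ^ 2 ∂μH[(finrank ℝ E : ℝ) - 1] ≤
        C * ((r / s) ^ finrank ℝ E * ⨍ y in ball 0 r, f y ^ 2 ∂μ) := by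
  obtain ⟨C, hC, hmean⟩ := exists_sq_le_mul_setAverage_ball μ
  refine ⟨C, hC, fun {f U s r} hf hU hs hsr hsub => ?_⟩
  have hcont : ContinuousOn (fun x => f x ^ 2) (closedBall 0 r) :=
    (hf.continuousOn.mono hsub).pow 2
  obtain ⟨y, hy, hle⟩ := exists_mem_sphere_setAverage_le hs
    (hcont.mono (sphere_subset_closedBall.trans (closedBall_subset_closedBall (by linarith))))
  have hdist : s + dist y 0 ≤ r := by rw [mem_sphere.1 hy]; linarith
  calc _ ≤ f y ^ 2 := hle
    _ ≤ C * ⨍ x in ball y s, f x ^ 2 ∂μ :=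
        hmean hf hU hs ((closedBall_subset_closedBall' hdist).trans hsub)
    _ ≤ _ := mul_le_mul_of_nonneg_left (setAverage_ball_le_of_subset (fun x => sq_nonneg (f x))
        (by linarith) hs (ball_subset_ball' hdist)
        (integrableOn_ball_of_continuousOn_closedBall hcont)) hC.le

lemma exists_sphAvg_sq_le (d : ℕ) [NeZero d] :
    ∃ C > 0, ∀ {u : EuclideanSpace ℝ (Fin d) → ℝ} {U : Set (EuclideanSpace ℝ (Fin d))} {s r : ℝ},
      HarmonicOffZeros u U → IsOpen U → 0 < s → 2 * s ≤ r → r ≤ 8 * s → closedBall 0 r ⊆ U →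
        sphAvg d (fun x => u x ^ 2) s ≤ C * ballAvg d (fun x => u x ^ 2) r := by
  obtain ⟨C, hC, hle⟩ := exists_setAverage_sphere_sq_le
    (volume : Measure (EuclideanSpace ℝ (Fin d)))
  rw [finrank_euclideanSpace_fin] at hle
  refine ⟨C * 8 ^ d, by positivity, fun {u U s r} hu hU hs hsr hrs hsub => ?_⟩
  have hr : 0 < r := by linarith
  have havg : 0 ≤ ballAvg d (fun x => u x ^ 2) r := setAverage_nonneg _ fun x => sq_nonneg (u x)
  calc sphAvg d (fun x => u x ^ 2) s
      ≤ C * ((r / s) ^ d * ballAvg d (fun x => u x ^ 2) r) := hle hu hU hs hsr hsub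
    _ ≤ C * (8 ^ d * ballAvg d (fun x => u x ^ 2) r) := by
        gcongr
        exact (div_le_iff₀ hs).2 hrs
    _ = C * 8 ^ d * ballAvg d (fun x => u x ^ 2) r := (mul_assoc _ _ _).symm

end HarmonicOffZeros

end SphericalAverage

section Doubling

lemma exists_div_four_pow_le_and_le {r r₀ : ℝ} (hr : 0 < r) (hrr₀ : r ≤ r₀) :
    ∃ j : ℕ, 2 * (r₀ / 4 ^ j) ≤ r ∧ r ≤ 8 * (r₀ / 4 ^ j) := by
  have hr₀ : 0 < r₀ := hr.trans_le hrr₀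
  obtain ⟨j, hlower, hupper⟩ := exists_nat_pow_near_of_lt_one (x := r / (8 * r₀)) (y := 1 / 4)
    (by positivity) ((div_le_one (by positivity)).2 (by linarith)) (by norm_num) (by norm_num)
  rw [lt_div_iff₀ (by positivity)] at hlower
  rw [div_le_iff₀ (by positivity)] at hupper
  refine ⟨j, hlower.le.trans_eq' ?_, hupper.trans_eq ?_⟩
  · rw [pow_succ, one_div_pow]
    ring
  · rw [one_div_pow]
    ring

lemma exists_mul_pow_le_of_le_four_pow_mul {a b : ℝ → ℝ} {r₀ C : ℝ} {β : ℕ} (hr₀ : 0 < r₀)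
    (ha : 0 < a r₀) (hC : 0 < C)
    (hdoubling : ∀ j : ℕ, a (r₀ / 4 ^ j) ≤ 4 ^ β * a (r₀ / 4 ^ (j + 1)))
    (hab : ∀ ⦃s r : ℝ⦄, 0 < s → 2 * s ≤ r → r ≤ 8 * s → r < r₀ → a s ≤ C * b r) :
    ∃ c > 0, ∀ r ∈ Set.Ioo 0 r₀, c * r ^ β ≤ b r := by
  have hiter (j : ℕ) : a r₀ ≤ (4 ^ β) ^ j * a (r₀ / 4 ^ j) := by
    induction j with
    | zero => simp
    | succ j ih =>
      rw [pow_succ, mul_assoc]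
      exact ih.trans (mul_le_mul_of_nonneg_left (hdoubling j) (by positivity))
  refine ⟨a r₀ / (C * (8 * r₀) ^ β), by positivity, fun r ⟨hr, hrr₀⟩ => ?_⟩
  obtain ⟨j, hlower, hupper⟩ := exists_div_four_pow_le_and_le hr hrr₀.le
  have hle : a r₀ ≤ (4 ^ β) ^ j * (C * b r) := (hiter j).trans
    (mul_le_mul_of_nonneg_left (hab (by positivity) hlower hupper hrr₀) (by positivity))
  have hCb : 0 ≤ C * b r := (pos_of_mul_pos_right (ha.trans_le hle) (by positivity)).le
  have hscale : r * 4 ^ j ≤ 8 * r₀ := by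
    rwa [← mul_div_assoc, le_div_iff₀ (by positivity)] at hupper
  rw [div_mul_eq_mul_div, div_le_iff₀ (by positivity)]
  calc a r₀ * r ^ β ≤ (4 ^ β) ^ j * (C * b r) * r ^ β := by gcongr
    _ = (r * 4 ^ j) ^ β * (C * b r) := by ring
    _ ≤ (8 * r₀) ^ β * (C * b r) := by gcongr
    _ = b r * (C * (8 * r₀) ^ β) := by ring

end Doubling

theorem doubling_implies_polynomial_lower_bound_general {d : ℕ} [NeZero d]
    {u : EuclideanSpace ℝ (Fin d) → ℝ} {R r₀ M : ℝ} (hu : HarmonicOffZeros u (ball 0 R))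
    (hr₀ : 0 < r₀) (hr₀R : r₀ < R) (hne : ∃ x ∈ ball 0 r₀, u x ≠ 0)
    (hdoubling : ∀ j : ℕ, sphAvg d (fun x => u x ^ 2) (r₀ / 4 ^ j) ≤
      M * sphAvg d (fun x => u x ^ 2) (r₀ / 4 ^ (j + 1))) :
    ∃ c > 0, ∃ β > 0, ∃ r₁ > 0, ∀ r ∈ Set.Ioo (0 : ℝ) r₁,
      c * r ^ β ≤ ballAvg d (fun x => u x ^ 2) r := by
  obtain ⟨C, hC, hcompare⟩ := HarmonicOffZeros.exists_sphAvg_sq_le d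
  obtain ⟨n, hn⟩ := pow_unbounded_of_one_lt M (by norm_num : (1 : ℝ) < 4)
  have hMβ : M ≤ 4 ^ (n + 1) := hn.le.trans (pow_le_pow_right₀ (by norm_num) n.le_succ)
  have hpos : 0 < sphAvg d (fun x => u x ^ 2) r₀ := by
    simpa only [finrank_euclideanSpace_fin, sphAvg] using
      hu.setAverage_sphere_sq_pos hr₀ (closedBall_subset_ball hr₀R) hne
  have hdoubling' (j : ℕ) := (hdoubling j).trans
    (mul_le_mul_of_nonneg_right hMβ (setAverage_nonneg _ fun x => sq_nonneg (u x)))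
  obtain ⟨c, hc, hlower⟩ := exists_mul_pow_le_of_le_four_pow_mul hr₀ hpos hC hdoubling'
    fun s r hs hsr hrs hrr₀ =>
      hcompare hu isOpen_ball hs hsr hrs (closedBall_subset_ball (hrr₀.trans hr₀R))
  exact ⟨c, hc, n + 1, n.succ_pos, r₀, hr₀, hlower⟩

/-- If `u` is harmonic on `Ω ∩ B₁`, vanishes on `B₁ \ Ω` (zero extension), is nontrivial
near `0`, and its spherical doubling index satisfies `N_u(2^{-k}) ≤ M` for all `k`, then
`⨍_{B_r} u² ≥ c r^β` for all small `r`: `u` does not vanish to infinite order at `0`. -/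
theorem doubling_implies_polynomial_lower_bound (d : ℕ) (hd : 2 ≤ d)
    (Ω : Set (EuclideanSpace ℝ (Fin d))) (hΩ : IsOpen Ω)
    (u : EuclideanSpace ℝ (Fin d) → ℝ)
    (hcont : ContinuousOn u (ball (0 : EuclideanSpace ℝ (Fin d)) 1))
    (hreg : ContDiffOn ℝ 2 u (Ω ∩ ball (0 : EuclideanSpace ℝ (Fin d)) 1))
    (hharm : ∀ x ∈ Ω ∩ ball (0 : EuclideanSpace ℝ (Fin d)) 1, lap d u x = 0)
    (hzero : ∀ x ∈ ball (0 : EuclideanSpace ℝ (Fin d)) 1, x ∉ Ω → u x = 0)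
    (hnontriv : ∀ ε : ℝ, 0 < ε → ∃ x ∈ ball (0 : EuclideanSpace ℝ (Fin d)) ε, u x ≠ 0)
    (M : ℝ) (hM : 0 < M)
    (hdoubling : ∀ k : ℕ,
      sphAvg d (fun x => (u x) ^ 2) ((1 / 2 : ℝ) ^ k) ≤
        M * sphAvg d (fun x => (u x) ^ 2) (((1 / 2 : ℝ) ^ k) / 4)) :
    ∃ c > 0, ∃ β > 0, ∃ r₁ > 0, ∀ r ∈ Set.Ioo (0 : ℝ) r₁,
      c * r ^ β ≤ ballAvg d (fun x => (u x) ^ 2) r := by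
  have : NeZero d := ⟨by omega⟩
  refine doubling_implies_polynomial_lower_bound_general (r₀ := 1 / 2) (M := M)
    (harmonicOffZeros_of_lap_eq_zero hΩ isOpen_ball hcont hreg hharm hzero) (by norm_num)
    (by norm_num) (hnontriv _ (by norm_num)) fun j => ?_
  have hscale : (1 / 2 : ℝ) ^ (2 * j + 1) = 1 / 2 / 4 ^ j := by
    rw [pow_succ', pow_mul, div_eq_mul_inv (1 / 2), ← inv_pow]
    norm_num
  simpa only [hscale, pow_succ, div_div, mul_assoc] using hdoubling (2 * j + 1)
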